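/- Let n and d be positive integers with n ≥ 2 and d ≥ 3. Then there exists a positive integer r and a finite tree T containing a vertex v of degree n, at distance at least d from every leaf of T, such that |I^(r)_v(T)| ≥ |I^(r)_u(T)| for every vertex u of T, and |I^(r)_v(T)| > |I^(r)_u(T)| for every leaf u of T. -/

import Mathlib

open Finset SimpleGraph
open scoped Classical

variable {V : Type*}

/-- The finset of independent sets of a finite graph `G`. -/
noncomputable def indepSets [Fintype V] (G : SimpleGraph V) : Finset (Finset V) :=
  univ.filter fun A => ∀ x ∈ A, ∀ y ∈ A, ¬ G.Adj x y

/-- The finset of independent sets of size `r` of `G`, i.e. `I^(r)(G)`. -/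
noncomputable def indepSetsSize [Fintype V] (G : SimpleGraph V) (r : ℕ) : Finset (Finset V) :=
  (indepSets G).filter fun A => A.card = r

/-- The `r`-star centred at `v`: independent sets of size `r` containing `v`. -/
noncomputable def ekrStar [Fintype V] (G : SimpleGraph V) (r : ℕ) (v : V) : Finset (Finset V) :=
  (indepSetsSize G r).filter fun A => v ∈ A

/-!
Join a root `v` to `n` hubs and every hub to an end `a` of each of `K` paths on `2 * (d + 1)`
vertices, the *branches*, and let `r = 1 + n * K * α`, where `α` is the independence number of a
branch. If a branch has `M` maximum independent sets, then the independent `r`-sets avoiding all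
hubs consist of `v` and one of these `M` sets in each branch. All `M ^ (n * K)` of them lie in the
star of `v`, but only a proportion of at most `(M - 1) / M` in the star of a branch vertex, since
no branch vertex lies in every maximum independent set.

A set containing a hub must avoid `a` in the `K` branches there, and its deficiencies below `α`
on the branches add up to at most `n`. Since some maximum independent set of a branch contains `a`,
this makes the stars of the hubs exponentially smaller than `M ^ (n * K)` as `K` grows. To see this,
give a set of deficiency `e` the weight `t ^ e`. Weights are multiplicative over branches, and as
`t → 0` the total weight of the `n` branches with the same index, one at each hub, tends to a limit
less than `M ^ n`. Fix `t > 0` for which it is still less, and let `K → ∞`.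
-/

section Star

variable {V' : Type*} [Fintype V] [Fintype V'] {G : SimpleGraph V} {G' : SimpleGraph V'}
  {A : Finset V} {r : ℕ} {v : V}

lemma mem_indepSets : A ∈ indepSets G ↔ ∀ x ∈ A, ∀ y ∈ A, ¬ G.Adj x y := by
  simp [indepSets]

lemma mem_indepSetsSize : A ∈ indepSetsSize G r ↔ A ∈ indepSets G ∧ #A = r :=
  mem_filter

lemma mem_ekrStar : A ∈ ekrStar G r v ↔ A ∈ indepSetsSize G r ∧ v ∈ A :=
  mem_filter

lemma card_le_indepNum_of_mem_indepSets (hA : A ∈ indepSets G) : #A ≤ G.indepNum :=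
  IsIndepSet.card_le_indepNum fun x hx y hy _ => mem_indepSets.1 hA x hx y hy

lemma card_indepSetsSize_indepNum_pos (G : SimpleGraph V) :
    0 < #(indepSetsSize G G.indepNum) := by
  obtain ⟨A, hA⟩ := G.exists_isNIndepSet_indepNum
  refine card_pos.2 ⟨A, mem_indepSetsSize.2 ⟨mem_indepSets.2 fun x hx y hy hxy => ?_, hA.card_eq⟩⟩
  exact hA.isIndepSet hx hy hxy.ne hxy

lemma card_ekrStar_lt_card_indepSetsSize (hv : ∃ A ∈ indepSetsSize G r, v ∉ A) :
    #(ekrStar G r v) < #(indepSetsSize G r) := by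
  obtain ⟨A, hA, hvA⟩ := hv
  exact card_lt_card ⟨filter_subset _ _, fun hsub => hvA (mem_ekrStar.1 (hsub hA)).2⟩

lemma map_mem_ekrStar_iff (e : G ≃g G') :
    A.map e.toEquiv.toEmbedding ∈ ekrStar G' r (e v) ↔ A ∈ ekrStar G r v := by
  have hv : e v = e.toEquiv.toEmbedding v := rfl
  simp only [mem_ekrStar, mem_indepSetsSize, mem_indepSets, forall_mem_map, card_map, hv, mem_map']
  simp [e.map_adj_iff]

lemma card_ekrStar_iso (e : G ≃g G') (r : ℕ) (v : V) :
    #(ekrStar G' r (e v)) = #(ekrStar G r v) := by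
  refine (card_bijective _ e.toEquiv.finsetCongr.bijective fun A => ?_).symm
  exact (map_mem_ekrStar_iff e).symm

end Star

section Walk

variable {G : SimpleGraph V}

lemma le_add_dist_of_forall_adj_le {f : V → ℕ} (hf : ∀ x y, G.Adj x y → f y ≤ f x + 1)
    {x y : V} (hxy : G.Reachable x y) : f y ≤ f x + G.dist x y := by
  obtain ⟨p, hp⟩ := hxy.exists_walk_length_eq_dist
  rw [← hp]
  clear hp hxy
  induction p with
  | nil => simp
  | cons h p ih =>
    have := hf _ _ h
    rw [Walk.length_cons]
    omega

lemma dist_le_dist_add_one_of_adj (hG : G.Connected) (a : V) {x y : V} (hxy : G.Adj x y) :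
    G.dist a y ≤ G.dist a x + 1 := by
  rw [← dist_eq_one_iff_adj.2 hxy]
  exact hG.dist_triangle

lemma dist_iso_le {V' : Type*} {G' : SimpleGraph V'} (hG : G.Connected) (e : G ≃g G') (x y : V) :
    G.dist x y ≤ G'.dist (e x) (e y) := by
  have h := le_add_dist_of_forall_adj_le (G := G') (f := fun z => G.dist x (e.symm z))
    (fun z w hzw => dist_le_dist_add_one_of_adj hG x (e.symm.map_adj_iff.2 hzw))
    ((Iso.reachable_iff (φ := e)).2 (hG x y))
  simpa using h

lemma isTree_of_connected_of_edgeSet_subset_range {E : Type*} [Finite V] [Finite E]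
    (hG : G.Connected) (f : E → Sym2 V) (hf : G.edgeSet ⊆ Set.range f)
    (hcard : Nat.card E < Nat.card V) : G.IsTree := by
  refine isTree_iff_connected_and_card.2
    ⟨hG, le_antisymm ?_ hG.card_vert_le_card_edgeSet_add_one⟩
  have hedge : Nat.card G.edgeSet ≤ Nat.card E :=
    (Nat.card_mono (Set.finite_range f) hf).trans (Finite.card_range_le f)
  omega

end Walk

section Path

lemma isTree_pathGraph (m : ℕ) : (pathGraph (m + 1)).IsTree := by
  refine isTree_of_connected_of_edgeSet_subset_range (pathGraph_connected m)
    (fun i : Fin m => s(i.castSucc, i.succ)) ?_ (by simp)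
  refine Sym2.ind fun x y hxy => ?_
  rcases pathGraph_adj.1 ((mem_edgeSet _).1 hxy) with h | h
  · exact ⟨⟨x, by omega⟩, by simp [h]⟩
  · exact ⟨⟨y, by omega⟩, by simp [h]⟩

lemma eq_last_of_degree_pathGraph_eq_one {m : ℕ} {x : Fin (m + 1)} (hx0 : x ≠ 0)
    (hx : (pathGraph (m + 1)).degree x = 1) : x = Fin.last m := by
  obtain ⟨y, -, hy⟩ := degree_eq_one_iff_existsUnique_adj.1 hx
  by_contra hlast
  have hpos : 0 < x.val := Nat.pos_of_ne_zero fun h => hx0 (Fin.ext h)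
  have hlt : x.val < m := Fin.val_lt_last hlast
  have hpred := hy ⟨x - 1, by omega⟩ (pathGraph_adj.2 (by simp only; omega))
  have hsucc := hy ⟨x + 1, by omega⟩ (pathGraph_adj.2 (by simp))
  have := congrArg Fin.val (hpred.trans hsucc.symm)
  simp only at this
  omega

lemma le_dist_zero_last_pathGraph (m : ℕ) : m ≤ (pathGraph (m + 1)).dist 0 (Fin.last m) := by
  have h := le_add_dist_of_forall_adj_le (f := Fin.val)
    (fun x y (hxy : (pathGraph (m + 1)).Adj x y) => by have := pathGraph_adj.1 hxy; omega)
    (pathGraph_preconnected (m + 1) 0 (Fin.last m))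
  simpa using h

/-- The vertices of parity `s` in the path on `2 * k` vertices. -/
noncomputable def parityClass (k s : ℕ) : Finset (Fin (2 * k)) :=
  {x | x.val % 2 = s}

lemma mem_parityClass {k s : ℕ} {x : Fin (2 * k)} : x ∈ parityClass k s ↔ x.val % 2 = s := by
  simp [parityClass]

lemma card_parityClass {k s : ℕ} (hs : s < 2) : #(parityClass k s) = k := by
  have hcard : #(univ : Finset (Fin k)) = #(parityClass k s) := by
    refine card_bij (fun i _ => ⟨2 * i + s, by omega⟩) ?_ ?_ ?_
    · intro i _
      rw [mem_parityClass]
      simp only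
      omega
    · intro i _ i' _ h
      simp only [Fin.mk.injEq] at h
      omega
    · intro x hx
      rw [mem_parityClass] at hx
      exact ⟨⟨x / 2, by omega⟩, mem_univ _, Fin.ext (by simp only; omega)⟩
  simpa using hcard.symm

lemma parityClass_mem_indepSets (k s : ℕ) : parityClass k s ∈ indepSets (pathGraph (2 * k)) := by
  refine mem_indepSets.2 fun x hx y hy hxy => ?_
  rw [mem_parityClass] at hx hy
  rw [pathGraph_adj] at hxy
  omega

lemma indepNum_pathGraph (k : ℕ) : (pathGraph (2 * k)).indepNum = k := by
  apply le_antisymm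
  · obtain ⟨A, hA⟩ := (pathGraph (2 * k)).exists_isNIndepSet_indepNum
    rw [← hA.card_eq]
    refine (card_le_card_of_injOn (t := range k) (fun x => x.val / 2) ?_ ?_).trans_eq
      (card_range k)
    · intro x _
      simp only [coe_range, Set.mem_Iio]
      omega
    · intro x hx y hy hxy
      by_contra hne
      refine hA.isIndepSet hx hy hne (pathGraph_adj.2 ?_)
      have := Fin.val_ne_of_ne hne
      simp only at hxy
      omega
  · simpa [card_parityClass] using card_le_indepNum_of_mem_indepSets (parityClass_mem_indepSets k 0)

lemma parityClass_mem_indepSetsSize {k s : ℕ} (hs : s < 2) :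
    parityClass k s ∈ indepSetsSize (pathGraph (2 * k)) (pathGraph (2 * k)).indepNum := by
  refine mem_indepSetsSize.2 ⟨parityClass_mem_indepSets k s, ?_⟩
  rw [indepNum_pathGraph, card_parityClass hs]

lemma exists_mem_indepSetsSize_pathGraph_mem {k : ℕ} (x : Fin (2 * k)) :
    ∃ B ∈ indepSetsSize (pathGraph (2 * k)) (pathGraph (2 * k)).indepNum, x ∈ B :=
  ⟨_, parityClass_mem_indepSetsSize (Nat.mod_lt x two_pos), mem_parityClass.2 rfl⟩

lemma exists_mem_indepSetsSize_pathGraph_notMem {k : ℕ} (x : Fin (2 * k)) :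
    ∃ B ∈ indepSetsSize (pathGraph (2 * k)) (pathGraph (2 * k)).indepNum, x ∉ B := by
  refine ⟨_, parityClass_mem_indepSetsSize (Nat.mod_lt (x + 1) two_pos), ?_⟩
  rw [mem_parityClass]
  omega

end Path

section HubGraph

variable {ι κ W : Type*}

/-- The vertices of `hubGraph`: `.inl none` is the root, `.inl (some i)` is the hub `i`, and
`.inr ((i, k), x)` is the vertex `x` of the `k`-th branch at the hub `i`. -/
abbrev HubVertex (ι κ W : Type*) := Option ι ⊕ (ι × κ) × W

/-- A root is joined to hubs indexed by `ι`, and every hub is joined to the vertex `a` of each of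
its own copies, indexed by `κ`, of the branch `H`. -/
def hubGraph (ι κ : Type*) (H : SimpleGraph W) (a : W) : SimpleGraph (HubVertex ι κ W) where
  Adj
    | .inl none, .inl (some _) => True
    | .inl (some _), .inl none => True
    | .inl (some i), .inr (q, x) => q.1 = i ∧ x = a
    | .inr (q, x), .inl (some i) => q.1 = i ∧ x = a
    | .inr (q, x), .inr (p, y) => q = p ∧ H.Adj x y
    | _, _ => False
  symm := ⟨by
    rintro ((_ | i) | ⟨q, x⟩) ((_ | j) | ⟨p, y⟩) h
    case inr.inr => exact ⟨h.1.symm, h.2.symm⟩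
    all_goals exact h⟩
  loopless := ⟨by
    rintro ((_ | i) | ⟨q, x⟩) h
    case inr => exact H.loopless.irrefl x h.2
    all_goals exact h⟩

variable {H : SimpleGraph W} {a : W}

lemma hubGraph_adj_root_iff {u : HubVertex ι κ W} :
    (hubGraph ι κ H a).Adj (.inl none) u ↔ ∃ i, u = .inl (some i) := by
  rcases u with (_ | i) | ⟨q, x⟩ <;> simp [hubGraph]

lemma hubGraph_adj_root_hub (i : ι) : (hubGraph ι κ H a).Adj (.inl none) (.inl (some i)) :=
  hubGraph_adj_root_iff.2 ⟨i, rfl⟩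

lemma hubGraph_adj_hub_branch (q : ι × κ) :
    (hubGraph ι κ H a).Adj (.inl (some q.1)) (.inr (q, a)) :=
  ⟨rfl, rfl⟩

lemma connected_hubGraph (hH : H.Connected) : (hubGraph ι κ H a).Connected := by
  refine connected_iff_exists_forall_reachable _ |>.2 ⟨.inl none, ?_⟩
  have hub (i : ι) : (hubGraph ι κ H a).Reachable (.inl none) (.inl (some i)) :=
    (hubGraph_adj_root_hub i).reachable
  rintro ((_ | i) | ⟨q, x⟩)
  · rfl
  · exact hub i
  · let copy : H →g hubGraph ι κ H a := ⟨fun x => .inr (q, x), fun h => ⟨rfl, h⟩⟩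
    exact (hub q.1).trans ((hubGraph_adj_hub_branch q).reachable.trans ((hH a x).map copy))

lemma isTree_hubGraph [Finite ι] [Finite κ] [Finite W] (hH : H.IsTree) :
    (hubGraph ι κ H a).IsTree := by
  refine isTree_of_connected_of_edgeSet_subset_range (connected_hubGraph hH.connected)
    (Sum.elim (fun i : ι => s(.inl none, .inl (some i)))
      (Sum.elim (fun q : ι × κ => s(.inl (some q.1), .inr (q, a)))
        fun p : (ι × κ) × H.edgeSet => p.2.1.map fun x => .inr (p.1, x))) ?_ ?_
  · refine Sym2.ind fun u v huv => ?_
    rw [mem_edgeSet] at huv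
    rcases u with (_ | i) | ⟨q, x⟩ <;> rcases v with (_ | j) | ⟨p, y⟩
    case inl.none.inl.some => exact ⟨.inl j, rfl⟩
    case inl.some.inl.none => exact ⟨.inl i, Sym2.eq_swap⟩
    case inl.some.inr =>
      obtain ⟨rfl, rfl⟩ := huv
      exact ⟨.inr (.inl p), rfl⟩
    case inr.inl.some =>
      obtain ⟨rfl, rfl⟩ := huv
      exact ⟨.inr (.inl q), Sym2.eq_swap⟩
    case inr.inr =>
      obtain ⟨rfl, hxy⟩ := huv
      exact ⟨.inr (.inr (q, ⟨s(x, y), hxy⟩)), rfl⟩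
    all_goals exact huv.elim
  · have hedges := (isTree_iff_connected_and_card.1 hH).2
    simp only [Nat.card_sum, Nat.card_prod, Finite.card_option, ← hedges]
    linarith

lemma degree_hubGraph_root [Fintype ι] [Fintype κ] [Fintype W] :
    (hubGraph ι κ H a).degree (.inl none) = Fintype.card ι := by
  have hneighbors : (hubGraph ι κ H a).neighborFinset (.inl none) =
      univ.map (Function.Embedding.some.trans Function.Embedding.inl) := by
    ext u
    simp [hubGraph_adj_root_iff, eq_comm]
  rw [← card_neighborFinset_eq_degree, hneighbors, card_map, card_univ]

lemma exists_branch_leaf_of_degree_hubGraph_eq_one [Fintype ι] [Fintype κ] [Fintype W]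
    [Nonempty κ] (hι : Fintype.card ι ≠ 1) (ha : ∃ b, H.Adj a b) {u : HubVertex ι κ W}
    (hu : (hubGraph ι κ H a).degree u = 1) :
    ∃ q x, u = .inr (q, x) ∧ x ≠ a ∧ H.degree x = 1 := by
  obtain ⟨w, hw, huniq⟩ := degree_eq_one_iff_existsUnique_adj.1 hu
  rcases u with (_ | i) | ⟨q, x⟩
  · exact absurd (degree_hubGraph_root.symm.trans hu) hι
  · obtain ⟨k⟩ := ‹Nonempty κ›
    have hroot := huniq _ (hubGraph_adj_root_hub i).symm
    have hbranch := huniq _ (hubGraph_adj_hub_branch (i, k))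
    simp [← hroot] at hbranch
  · have hxa : x ≠ a := by
      rintro rfl
      obtain ⟨b, hb⟩ := ha
      have hhub := huniq _ (hubGraph_adj_hub_branch q).symm
      have hbranch := huniq (.inr (q, b)) ⟨rfl, hb⟩
      simp [← hhub] at hbranch
    refine ⟨q, x, rfl, hxa, degree_eq_one_iff_existsUnique_adj.2 ?_⟩
    rcases w with (_ | i) | ⟨p, y⟩
    · exact hw.elim
    · exact absurd hw.2 hxa
    · obtain ⟨rfl, hxy⟩ := hw
      refine ⟨y, hxy, fun z hxz => ?_⟩
      simpa using huniq (.inr (q, z)) ⟨rfl, hxz⟩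

lemma dist_add_two_le_dist_hubGraph_root (hH : H.Connected) (q : ι × κ) (x : W) :
    H.dist a x + 2 ≤ (hubGraph ι κ H a).dist (.inl none) (.inr (q, x)) := by
  let depth : HubVertex ι κ W → ℕ :=
    Sum.elim (fun c => c.elim 0 fun _ => 1) fun p => H.dist a p.2 + 2
  have hdepth (u v) (huv : (hubGraph ι κ H a).Adj u v) : depth v ≤ depth u + 1 := by
    rcases u with (_ | i) | ⟨q, x⟩ <;> rcases v with (_ | j) | ⟨p, y⟩
    case inl.some.inr => simp [depth, huv.2]
    case inr.inr =>
      have := dist_le_dist_add_one_of_adj hH a huv.2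
      simp only [depth, Sum.elim_inr]
      omega
    case inl.none.inr => exact huv.elim
    all_goals simp [depth]
  simpa [depth] using le_add_dist_of_forall_adj_le hdepth
    (connected_hubGraph hH (.inl none) (.inr (q, x)))

end HubGraph

section DeficiencySum

variable {W : Type*}

/-- The generating function of a family `F` of sets of size at most `k`, in which a set of size
`k - e` has weight `t ^ e`. Its value at `0` counts the members of size exactly `k`. -/
noncomputable def deficiencySum (k : ℕ) (F : Finset (Finset W)) (t : ℝ) : ℝ :=
  ∑ B ∈ F, t ^ (k - #B)

lemma deficiencySum_nonneg (k : ℕ) (F : Finset (Finset W)) {t : ℝ} (ht : 0 ≤ t) :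
    0 ≤ deficiencySum k F t :=
  sum_nonneg fun _ _ => pow_nonneg ht _

lemma continuous_deficiencySum (k : ℕ) (F : Finset (Finset W)) : Continuous (deficiencySum k F) :=
  continuous_finsetSum _ fun _ _ => continuous_pow _

lemma deficiencySum_zero {k : ℕ} {F : Finset (Finset W)} (hF : ∀ B ∈ F, #B ≤ k) :
    deficiencySum k F 0 = #{B ∈ F | #B = k} := by
  rw [deficiencySum, card_filter, Nat.cast_sum]
  refine sum_congr rfl fun B hB => ?_
  have := hF B hB
  rw [zero_pow_eq, Nat.cast_ite, Nat.cast_one, Nat.cast_zero]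
  exact if_congr (by omega) rfl rfl

end DeficiencySum

section Slice

variable {C Q W : Type*} [Fintype W]

/-- The part of a set of vertices of `C ⊕ Q × W` that lies in the `q`-th copy of `W`. -/
noncomputable def sliceAt (A : Finset (C ⊕ Q × W)) (q : Q) : Finset W :=
  {x | .inr (q, x) ∈ A}

lemma mem_sliceAt {A : Finset (C ⊕ Q × W)} {q : Q} {x : W} : x ∈ sliceAt A q ↔ .inr (q, x) ∈ A := by
  simp [sliceAt]

variable [Fintype Q]

/-- A set of vertices of `C ⊕ Q × W` amounts to its part in `C` together with its slices. -/
noncomputable def sliceAtEquiv : Finset (C ⊕ Q × W) ≃ Finset C × (Q → Finset W) where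
  toFun A := (A.toLeft, sliceAt A)
  invFun p := p.1.disjSum {z | z.2 ∈ p.2 z.1}
  left_inv A := by ext (c | ⟨q, x⟩) <;> simp [mem_sliceAt]
  right_inv p := by
    refine Prod.ext (by simp) (funext fun q => ?_)
    ext x
    simp [mem_sliceAt]

lemma card_toLeft_add_sum_card_sliceAt (A : Finset (C ⊕ Q × W)) :
    #A.toLeft + ∑ q, #(sliceAt A q) = #A := by
  rw [← card_toLeft_add_card_toRight (u := A),
    card_eq_sum_card_fiberwise (t := univ) (f := Prod.fst) fun _ _ => mem_coe.2 (mem_univ _)]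
  congr 1
  refine sum_congr rfl fun q _ => card_bij (fun x _ => (q, x)) ?_ ?_ ?_
  · simp [mem_sliceAt]
  · simp
  · rintro ⟨p, x⟩ h
    obtain ⟨hmem, rfl⟩ := mem_filter.1 h
    exact ⟨x, mem_sliceAt.2 (mem_toRight.1 hmem), rfl⟩

/-- The sets of vertices of `C ⊕ Q × W` whose part in `C` is `c` and whose `q`-th slice belongs to
`F q` for every `q`. -/
noncomputable def sliceFamily (c : Finset C) (F : Q → Finset (Finset W)) :
    Finset (Finset (C ⊕ Q × W)) :=
  ({c} ×ˢ Fintype.piFinset F).map sliceAtEquiv.symm.toEmbedding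

lemma mem_sliceFamily {c : Finset C} {F : Q → Finset (Finset W)} {A : Finset (C ⊕ Q × W)} :
    A ∈ sliceFamily c F ↔ A.toLeft = c ∧ ∀ q, sliceAt A q ∈ F q := by
  rw [sliceFamily, mem_map_equiv]
  simp [sliceAtEquiv, and_comm, eq_comm]

lemma card_sliceFamily (c : Finset C) (F : Q → Finset (Finset W)) :
    #(sliceFamily c F) = ∏ q, #(F q) := by
  simp [sliceFamily]

lemma card_mul_pow_le_two_pow_mul_prod_deficiencySum [Fintype C] {S : Finset (Finset (C ⊕ Q × W))}
    {F : Q → Finset (Finset W)} {k e : ℕ} {t : ℝ} (ht₀ : 0 ≤ t) (ht₁ : t ≤ 1)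
    (hF : ∀ A ∈ S, ∀ q, sliceAt A q ∈ F q) (he : ∀ A ∈ S, ∑ q, (k - #(sliceAt A q)) ≤ e) :
    #S * t ^ e ≤ 2 ^ Fintype.card C * ∏ q, deficiencySum k (F q) t := by
  let weight (p : Finset C × (Q → Finset W)) : ℝ := ∏ q, t ^ (k - #(p.2 q))
  have hweight (A) (hA : A ∈ S) : t ^ e ≤ weight (sliceAtEquiv A) := by
    rw [show weight (sliceAtEquiv A) = t ^ ∑ q, (k - #(sliceAt A q)) from prod_pow_eq_pow_sum _ _ _]
    exact pow_le_pow_of_le_one ht₀ ht₁ (he A hA)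
  have hsub : S.map sliceAtEquiv.toEmbedding ⊆ univ ×ˢ Fintype.piFinset F := by
    intro p hp
    obtain ⟨A, hA, rfl⟩ := mem_map.1 hp
    simpa [sliceAtEquiv] using hF A hA
  calc (#S : ℝ) * t ^ e = ∑ _A ∈ S, t ^ e := by simp
    _ ≤ ∑ A ∈ S, weight (sliceAtEquiv A) := sum_le_sum hweight
    _ = ∑ p ∈ S.map sliceAtEquiv.toEmbedding, weight p := by rw [sum_map]; rfl
    _ ≤ ∑ p ∈ univ ×ˢ Fintype.piFinset F, weight p :=
      sum_le_sum_of_subset_of_nonneg hsub fun _ _ _ => prod_nonneg fun _ _ => pow_nonneg ht₀ _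
    _ = 2 ^ Fintype.card C * ∏ q, deficiencySum k (F q) t := by
      simp [sum_product, weight, deficiencySum, prod_univ_sum]

end Slice

section HubGraphStars

variable {ι κ W : Type*} {A : Finset (HubVertex ι κ W)}

/-- A set of vertices of `hubGraph` containing no hub. -/
def HubFree (A : Finset (HubVertex ι κ W)) : Prop :=
  ∀ i, .inl (some i) ∉ A

lemma hubFree_of_toLeft_eq (hA : A.toLeft = {none}) : HubFree A := by
  intro i
  rw [← mem_toLeft, hA]
  simp

variable [Fintype ι] [Fintype κ] [Fintype W] {H : SimpleGraph W} {a : W}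

lemma mem_indepSets_hubGraph :
    A ∈ indepSets (hubGraph ι κ H a) ↔
      (∀ i, .inl none ∈ A → .inl (some i) ∉ A) ∧
      (∀ q, .inl (some q.1) ∈ A → a ∉ sliceAt A q) ∧
      ∀ q, sliceAt A q ∈ indepSets H := by
  simp only [mem_indepSets, mem_sliceAt]
  constructor
  · intro hA
    refine ⟨fun i hroot hhub => hA _ hroot _ hhub (hubGraph_adj_root_hub i),
      fun q hhub ha => hA _ hhub _ ha (hubGraph_adj_hub_branch q),
      fun q x hx y hy hxy => hA _ hx _ hy ⟨rfl, hxy⟩⟩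
  · rintro ⟨hroot, hhub, hbranch⟩ u hu v hv huv
    rcases u with (_ | i) | ⟨q, x⟩ <;> rcases v with (_ | j) | ⟨p, y⟩
    case inl.none.inl.some => exact hroot j hu hv
    case inl.some.inl.none => exact hroot i hv hu
    case inl.some.inr =>
      obtain ⟨rfl, rfl⟩ := huv
      exact hhub p hu hv
    case inr.inl.some =>
      obtain ⟨rfl, rfl⟩ := huv
      exact hhub q hv hu
    case inr.inr =>
      obtain ⟨rfl, hxy⟩ := huv
      exact hbranch q x hu y hv hxy
    all_goals exact huv

/-- The size of the sets consisting of the root of `hubGraph ι κ H a` and of a maximum independent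
set in every branch. -/
noncomputable def hubStarSize (ι κ : Type*) [Fintype ι] [Fintype κ] (H : SimpleGraph W) : ℕ :=
  1 + Fintype.card (ι × κ) * H.indepNum

lemma mem_indepSetsSize_hubGraph_iff_of_hubFree (hA : HubFree A) :
    A ∈ indepSetsSize (hubGraph ι κ H a) (hubStarSize ι κ H) ↔
      A.toLeft = {none} ∧ ∀ q, sliceAt A q ∈ indepSetsSize H H.indepNum := by
  have hcard := card_toLeft_add_sum_card_sliceAt A
  have hsum : ∑ _q : ι × κ, H.indepNum = Fintype.card (ι × κ) * H.indepNum := by simp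
  simp only [mem_indepSetsSize, hubStarSize, mem_indepSets_hubGraph]
  constructor
  · rintro ⟨⟨-, -, hbranch⟩, hsize⟩
    have hsub : A.toLeft ⊆ {none} := by
      rintro (_ | i) hi
      · simp
      · exact absurd (mem_toLeft.1 hi) (hA i)
    have hleft : #A.toLeft ≤ 1 := card_le_card hsub
    have hle : ∀ q ∈ univ, #(sliceAt A q) ≤ H.indepNum := fun q _ =>
      card_le_indepNum_of_mem_indepSets (hbranch q)
    have hsum_le := sum_le_sum hle
    refine ⟨eq_of_subset_of_card_le hsub (by rw [card_singleton]; omega), fun q => ?_⟩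
    exact ⟨hbranch q, (sum_eq_sum_iff_of_le hle).1 (by omega) q (mem_univ q)⟩
  · rintro ⟨hleft, hbranch⟩
    refine ⟨⟨fun i _ => hA i, fun q hq => absurd hq (hA q.1), fun q => (hbranch q).1⟩, ?_⟩
    rw [← hcard, hleft, card_singleton, sum_congr rfl fun q _ => (hbranch q).2, hsum]

lemma card_hubFree_ekrStar_root :
    #{A ∈ ekrStar (hubGraph ι κ H a) (hubStarSize ι κ H) (.inl none) | HubFree A} =
      #(indepSetsSize H H.indepNum) ^ Fintype.card (ι × κ) := by
  have hfamily : {A ∈ ekrStar (hubGraph ι κ H a) (hubStarSize ι κ H) (.inl none) | HubFree A} =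
      sliceFamily {none} fun _ => indepSetsSize H H.indepNum := by
    ext A
    simp only [mem_filter, mem_ekrStar, mem_sliceFamily]
    constructor
    · rintro ⟨⟨hA, -⟩, hfree⟩
      exact (mem_indepSetsSize_hubGraph_iff_of_hubFree hfree).1 hA
    · intro hA
      have hfree := hubFree_of_toLeft_eq hA.1
      refine ⟨⟨(mem_indepSetsSize_hubGraph_iff_of_hubFree hfree).2 hA, ?_⟩, hfree⟩
      simp [← mem_toLeft, hA.1]
  rw [hfamily, card_sliceFamily, prod_const, card_univ]

lemma card_hubFree_ekrStar_branch_mul_le (q : ι × κ) (x : W) :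
    #{A ∈ ekrStar (hubGraph ι κ H a) (hubStarSize ι κ H) (.inr (q, x)) | HubFree A} *
        #(indepSetsSize H H.indepNum) ≤
      #(ekrStar H H.indepNum x) * #(indepSetsSize H H.indepNum) ^ Fintype.card (ι × κ) := by
  let F : ι × κ → Finset (Finset W) :=
    Function.update (fun _ => indepSetsSize H H.indepNum) q (ekrStar H H.indepNum x)
  have hsub : {A ∈ ekrStar (hubGraph ι κ H a) (hubStarSize ι κ H) (.inr (q, x)) | HubFree A} ⊆
      sliceFamily {none} F := by
    intro A hA
    obtain ⟨hstar, hfree⟩ := mem_filter.1 hA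
    obtain ⟨hsize, hx⟩ := mem_ekrStar.1 hstar
    obtain ⟨hleft, hbranch⟩ := (mem_indepSetsSize_hubGraph_iff_of_hubFree hfree).1 hsize
    refine mem_sliceFamily.2 ⟨hleft, fun p => ?_⟩
    rcases eq_or_ne p q with rfl | hpq
    · simpa [F] using mem_ekrStar.2 ⟨hbranch p, mem_sliceAt.2 hx⟩
    · simpa [F, hpq] using hbranch p
  have hprod : (∏ p, #(F p)) * #(indepSetsSize H H.indepNum) =
      #(ekrStar H H.indepNum x) * #(indepSetsSize H H.indepNum) ^ Fintype.card (ι × κ) := by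
    have hrest : ∀ p ∈ univ.erase q, #(F p) = #(indepSetsSize H H.indepNum) := fun p hp => by
      simp [F, ne_of_mem_erase hp]
    rw [← mul_prod_erase univ _ (mem_univ q), mul_assoc, prod_congr rfl hrest, ← card_univ,
      ← prod_const, ← prod_erase_mul univ _ (mem_univ q)]
    simp [F]
  rw [← hprod, ← card_sliceFamily {none} F]
  exact Nat.mul_le_mul_right _ (card_le_card hsub)

lemma card_ekrStar_le_card_hubFree_add_sum_hub (r : ℕ) (u : HubVertex ι κ W) :
    #(ekrStar (hubGraph ι κ H a) r u) ≤ #{A ∈ ekrStar (hubGraph ι κ H a) r u | HubFree A} +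
      ∑ i, #(ekrStar (hubGraph ι κ H a) r (.inl (some i))) := by
  have hsub : {A ∈ ekrStar (hubGraph ι κ H a) r u | ¬ HubFree A} ⊆
      univ.biUnion fun i => ekrStar (hubGraph ι κ H a) r (.inl (some i)) := by
    intro A hA
    obtain ⟨hstar, hhub⟩ := mem_filter.1 hA
    obtain ⟨i, hi⟩ := not_forall_not.1 hhub
    exact mem_biUnion.2 ⟨i, mem_univ i, mem_ekrStar.2 ⟨(mem_ekrStar.1 hstar).1, hi⟩⟩
  rw [← card_filter_add_card_filter_not HubFree]
  exact Nat.add_le_add_left ((card_le_card hsub).trans card_biUnion_le) _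

end HubGraphStars

section HubStarBound

variable {ι κ W : Type*} [Fintype ι] [Fintype κ] [Fintype W] {H : SimpleGraph W} {a : W}

lemma sum_indepNum_sub_card_sliceAt_le {A : Finset (HubVertex ι κ W)}
    (hA : A ∈ indepSetsSize (hubGraph ι κ H a) (hubStarSize ι κ H)) :
    ∑ q, (H.indepNum - #(sliceAt A q)) ≤ Fintype.card ι := by
  obtain ⟨hindep, hsize⟩ := mem_indepSetsSize.1 hA
  have hbranch (q) : #(sliceAt A q) ≤ H.indepNum :=
    card_le_indepNum_of_mem_indepSets ((mem_indepSets_hubGraph.1 hindep).2.2 q)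
  have hsum : ∑ q, (H.indepNum - #(sliceAt A q)) + ∑ q, #(sliceAt A q) =
      Fintype.card (ι × κ) * H.indepNum := by
    rw [← sum_add_distrib, sum_congr rfl fun q _ => Nat.sub_add_cancel (hbranch q)]
    simp
  have hleft : #A.toLeft ≤ Fintype.card ι + 1 :=
    (card_le_univ _).trans_eq Fintype.card_option
  have hcard := card_toLeft_add_sum_card_sliceAt A
  rw [hubStarSize] at hsize
  omega

/-- The total weight of the independent sets of `n` disjoint copies of `H`, the first of which is
to avoid `a`, where each missing vertex costs a factor `t`. These are the traces, on one branch at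
each of `n` hubs, of the independent sets of `hubGraph` containing a given hub. -/
noncomputable def occupiedHubWeight (n : ℕ) (H : SimpleGraph W) (a : W) (t : ℝ) : ℝ :=
  deficiencySum H.indepNum {B ∈ indepSets H | a ∉ B} t *
    deficiencySum H.indepNum (indepSets H) t ^ (n - 1)

lemma prod_ite_fst_eq {M : Type*} [CommMonoid M] (i : ι) (x y : M) :
    ∏ q : ι × κ, (if q.1 = i then x else y) =
      (x * y ^ (Fintype.card ι - 1)) ^ Fintype.card κ := by
  have hrow : ∏ j, (if j = i then x else y) = x * y ^ (Fintype.card ι - 1) := by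
    rw [← mul_prod_erase univ _ (mem_univ i), if_pos rfl,
      prod_congr rfl fun j hj => if_neg (ne_of_mem_erase hj), prod_const,
      card_erase_of_mem (mem_univ i), card_univ]
  rw [Fintype.prod_prod_type_right, prod_congr rfl fun _ _ => hrow, prod_const, card_univ]

lemma card_ekrStar_hub_mul_pow_le (i : ι) {t : ℝ} (ht₀ : 0 ≤ t) (ht₁ : t ≤ 1) :
    #(ekrStar (hubGraph ι κ H a) (hubStarSize ι κ H) (.inl (some i))) * t ^ Fintype.card ι ≤
      2 ^ (Fintype.card ι + 1) *
        occupiedHubWeight (Fintype.card ι) H a t ^ Fintype.card κ := by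
  let F (q : ι × κ) : Finset (Finset W) :=
    if q.1 = i then {B ∈ indepSets H | a ∉ B} else indepSets H
  have hF (A) (hA : A ∈ ekrStar (hubGraph ι κ H a) (hubStarSize ι κ H) (.inl (some i))) (q) :
      sliceAt A q ∈ F q := by
    obtain ⟨hsize, hi⟩ := mem_ekrStar.1 hA
    obtain ⟨-, hhub, hbranch⟩ := mem_indepSets_hubGraph.1 (mem_indepSetsSize.1 hsize).1
    by_cases hq : q.1 = i
    · simpa [F, hq] using ⟨hbranch q, hhub q (hq ▸ hi)⟩
    · simpa [F, hq] using hbranch q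
  have hbound := card_mul_pow_le_two_pow_mul_prod_deficiencySum ht₀ ht₁ hF fun A hA =>
    sum_indepNum_sub_card_sliceAt_le (mem_ekrStar.1 hA).1
  have hprod : ∏ q, deficiencySum H.indepNum (F q) t =
      occupiedHubWeight (Fintype.card ι) H a t ^ Fintype.card κ := by
    simp only [F, apply_ite (deficiencySum H.indepNum · t)]
    exact prod_ite_fst_eq i _ _
  rwa [hprod, Fintype.card_option] at hbound

end HubStarBound

section ManyBranches

open Filter Topology

variable {ι W : Type*} [Fintype ι] [Fintype W] {H : SimpleGraph W} {a : W}

lemma occupiedHubWeight_nonneg (n : ℕ) (H : SimpleGraph W) (a : W) {t : ℝ} (ht : 0 ≤ t) :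
    0 ≤ occupiedHubWeight n H a t :=
  mul_nonneg (deficiencySum_nonneg _ _ ht) (pow_nonneg (deficiencySum_nonneg _ _ ht) _)

lemma continuous_occupiedHubWeight (n : ℕ) (H : SimpleGraph W) (a : W) :
    Continuous (occupiedHubWeight n H a) :=
  (continuous_deficiencySum _ _).mul ((continuous_deficiencySum _ _).pow _)

lemma occupiedHubWeight_zero_lt {n : ℕ} (hn : n ≠ 0)
    (ha : ∃ B ∈ indepSetsSize H H.indepNum, a ∈ B) :
    occupiedHubWeight n H a 0 < (#(indepSetsSize H H.indepNum) : ℝ) ^ n := by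
  obtain ⟨B, hB, haB⟩ := ha
  have hM : (0 : ℝ) < #(indepSetsSize H H.indepNum) := mod_cast card_indepSetsSize_indepNum_pos H
  have hall : deficiencySum H.indepNum (indepSets H) 0 = #(indepSetsSize H H.indepNum) :=
    deficiencySum_zero fun _ => card_le_indepNum_of_mem_indepSets
  have havoid : deficiencySum H.indepNum {B ∈ indepSets H | a ∉ B} 0 <
      #(indepSetsSize H H.indepNum) := by
    rw [deficiencySum_zero fun _ hB => card_le_indepNum_of_mem_indepSets (mem_filter.1 hB).1]
    refine mod_cast card_lt_card ⟨filter_subset_filter _ (filter_subset _ _), fun hsub => ?_⟩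
    exact (mem_filter.1 (mem_filter.1 (hsub hB)).1).2 haB
  rw [occupiedHubWeight, hall, ← mul_pow_sub_one hn]
  exact mul_lt_mul_of_pos_right havoid (pow_pos hM _)

lemma exists_occupiedHubWeight_lt {n : ℕ} (hn : n ≠ 0)
    (ha : ∃ B ∈ indepSetsSize H H.indepNum, a ∈ B) :
    ∃ t : ℝ, 0 < t ∧ t ≤ 1 ∧
      occupiedHubWeight n H a t < (#(indepSetsSize H H.indepNum) : ℝ) ^ n := by
  have hlt : ∀ᶠ t in 𝓝[>] (0 : ℝ),
      occupiedHubWeight n H a t < (#(indepSetsSize H H.indepNum) : ℝ) ^ n :=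
    ((continuous_occupiedHubWeight n H a).tendsto 0).mono_left nhdsWithin_le_nhds
      |>.eventually_lt_const (occupiedHubWeight_zero_lt hn ha)
  obtain ⟨t, ht, ht₀, ht₁⟩ := (hlt.and (Ioc_mem_nhdsGT one_pos)).exists
  exact ⟨t, ht₀, ht₁, ht⟩

lemma eventually_mul_pow_lt_pow {x y : ℝ} (c : ℝ) (hx : 0 ≤ x) (hxy : x < y) :
    ∀ᶠ K : ℕ in atTop, c * x ^ K < y ^ K := by
  have hy : 0 < y := hx.trans_lt hxy
  have hlim : Tendsto (fun K : ℕ => c * (x / y) ^ K) atTop (𝓝 (c * 0)) :=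
    (tendsto_pow_atTop_nhds_zero_of_lt_one (by positivity) ((div_lt_one hy).2 hxy)).const_mul c
  rw [mul_zero] at hlim
  filter_upwards [hlim.eventually_lt_const one_pos] with K hK
  rwa [div_pow, ← mul_div_assoc, div_lt_one (pow_pos hy K)] at hK

lemma eventually_mul_sum_card_ekrStar_hub_lt [Nonempty ι] (c : ℕ)
    (ha : ∃ B ∈ indepSetsSize H H.indepNum, a ∈ B) :
    ∀ᶠ K in atTop, c * ∑ i, #(ekrStar (hubGraph ι (Fin K) H a) (hubStarSize ι (Fin K) H)
      (.inl (some i))) < #(indepSetsSize H H.indepNum) ^ Fintype.card (ι × Fin K) := by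
  set n := Fintype.card ι
  obtain ⟨t, ht₀, ht₁, ht⟩ := exists_occupiedHubWeight_lt (n := n) Fintype.card_ne_zero ha
  set x := occupiedHubWeight n H a t
  filter_upwards [eventually_mul_pow_lt_pow (c * (n * (2 ^ (n + 1) / t ^ n)))
    (occupiedHubWeight_nonneg n H a ht₀.le) ht] with K hK
  have hhub (i : ι) : (#(ekrStar (hubGraph ι (Fin K) H a) (hubStarSize ι (Fin K) H)
      (.inl (some i))) : ℝ) ≤ 2 ^ (n + 1) / t ^ n * x ^ K := by
    rw [div_mul_eq_mul_div, le_div_iff₀ (pow_pos ht₀ n)]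
    simpa using card_ekrStar_hub_mul_pow_le (κ := Fin K) i ht₀.le ht₁
  have hsum := sum_le_sum fun i (_ : i ∈ univ) => hhub i
  rw [sum_const, card_univ, nsmul_eq_mul] at hsum
  rw [← Nat.cast_lt (α := ℝ), Fintype.card_prod, Fintype.card_fin, pow_mul]
  push_cast
  calc _ ≤ (c : ℝ) * (n * (2 ^ (n + 1) / t ^ n * x ^ K)) := by gcongr
    _ = c * (n * (2 ^ (n + 1) / t ^ n)) * x ^ K := by ring
    _ < _ := hK

lemma card_ekrStar_branch_lt {κ : Type*} [Fintype κ] (q : ι × κ) {x : W}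
    (hx : ∃ B ∈ indepSetsSize H H.indepNum, x ∉ B)
    (hhub : #(indepSetsSize H H.indepNum) *
      ∑ i, #(ekrStar (hubGraph ι κ H a) (hubStarSize ι κ H) (.inl (some i))) <
        #(indepSetsSize H H.indepNum) ^ Fintype.card (ι × κ)) :
    #(ekrStar (hubGraph ι κ H a) (hubStarSize ι κ H) (.inr (q, x))) <
      #(indepSetsSize H H.indepNum) ^ Fintype.card (ι × κ) := by
  have hsplit := card_ekrStar_le_card_hubFree_add_sum_hub (H := H) (a := a) (hubStarSize ι κ H)
    (.inr (q, x))
  have hfree := card_hubFree_ekrStar_branch_mul_le (H := H) (a := a) q x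
  have hstar := card_ekrStar_lt_card_indepSetsSize hx
  set M := #(indepSetsSize H H.indepNum)
  set hubs := ∑ i, #(ekrStar (hubGraph ι κ H a) (hubStarSize ι κ H) (.inl (some i)))
  set free := #{A ∈ ekrStar (hubGraph ι κ H a) (hubStarSize ι κ H) (.inr (q, x)) | HubFree A}
  refine lt_of_mul_lt_mul_left (a := M) ?_ M.zero_le
  calc _ ≤ M * (free + hubs) := Nat.mul_le_mul_left M hsplit
    _ = free * M + M * hubs := by ring
    _ < #(ekrStar H H.indepNum x) * M ^ Fintype.card (ι × κ) + M ^ Fintype.card (ι × κ) :=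
      add_lt_add_of_le_of_lt hfree hhub
    _ = (#(ekrStar H H.indepNum x) + 1) * M ^ Fintype.card (ι × κ) := by ring
    _ ≤ M * M ^ Fintype.card (ι × κ) := Nat.mul_le_mul_right _ hstar

lemma eventually_card_ekrStar_lt_root [Nonempty ι]
    (ha : ∃ B ∈ indepSetsSize H H.indepNum, a ∈ B)
    (hH : ∀ x, ∃ B ∈ indepSetsSize H H.indepNum, x ∉ B) :
    ∀ᶠ K in atTop, ∀ u ≠ .inl none,
      #(ekrStar (hubGraph ι (Fin K) H a) (hubStarSize ι (Fin K) H) u) <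
        #(ekrStar (hubGraph ι (Fin K) H a) (hubStarSize ι (Fin K) H) (.inl none)) := by
  filter_upwards [eventually_mul_sum_card_ekrStar_hub_lt (ι := ι) #(indepSetsSize H H.indepNum) ha]
    with K hhub u hu
  refine lt_of_lt_of_le ?_ (card_hubFree_ekrStar_root.symm.trans_le (card_filter_le _ HubFree))
  rcases u with (_ | i) | ⟨q, x⟩
  · exact absurd rfl hu
  · let hubStar (j : ι) : ℕ :=
      #(ekrStar (hubGraph ι (Fin K) H a) (hubStarSize ι (Fin K) H) (.inl (some j)))
    calc hubStar i ≤ ∑ j, hubStar j := single_le_sum_of_canonicallyOrdered (mem_univ i)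
      _ ≤ #(indepSetsSize H H.indepNum) * ∑ j, hubStar j :=
        Nat.le_mul_of_pos_left _ (card_indepSetsSize_indepNum_pos H)
      _ < _ := hhub
  · exact card_ekrStar_branch_lt q (hH x) hhub

end ManyBranches

lemma le_dist_root_of_degree_hubGraph_pathGraph_eq_one {ι κ : Type*} [Fintype ι] [Fintype κ]
    [Nonempty κ] (hι : Fintype.card ι ≠ 1) {m : ℕ} {u : HubVertex ι κ (Fin (m + 2))}
    (hu : (hubGraph ι κ (pathGraph (m + 2)) 0).degree u = 1) :
    m + 3 ≤ (hubGraph ι κ (pathGraph (m + 2)) 0).dist (.inl none) u := by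
  have hadj : (pathGraph (m + 2)).Adj 0 1 := pathGraph_adj.2 (by simp)
  obtain ⟨q, x, rfl, hx0, hx⟩ := exists_branch_leaf_of_degree_hubGraph_eq_one hι ⟨1, hadj⟩ hu
  rw [eq_last_of_degree_pathGraph_eq_one hx0 hx]
  exact (Nat.add_le_add_right (le_dist_zero_last_pathGraph (m + 1)) 2).trans
    (dist_add_two_le_dist_hubGraph_root (pathGraph_connected (m + 1)) q _)

/-- For all `n ≥ 2` and `d ≥ 3` there is a positive integer `r` and a
finite tree `T` with a vertex `v` of degree `n`, at distance at least `d` from every leaf,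
such that the `r`-star centred at `v` is at least as large as every `r`-star of `T` and
strictly larger than every `r`-star centred at a leaf. -/
theorem exists_tree_star_centre_deep (n d : ℕ) (hn : 2 ≤ n) (hd : 3 ≤ d) :
    ∃ r : ℕ, 0 < r ∧ ∃ (N : ℕ) (T : SimpleGraph (Fin N)) (v : Fin N),
      T.IsTree ∧ T.degree v = n ∧
      (∀ u, T.degree u = 1 → d ≤ T.dist v u) ∧
      (∀ u, (ekrStar T r u).card ≤ (ekrStar T r v).card) ∧
      (∀ u, T.degree u = 1 → (ekrStar T r u).card < (ekrStar T r v).card) := by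
  have : NeZero n := ⟨by omega⟩
  obtain ⟨K, hstar, hK⟩ := ((eventually_card_ekrStar_lt_root (ι := Fin n)
    (exists_mem_indepSetsSize_pathGraph_mem (k := d + 1) 0)
    exists_mem_indepSetsSize_pathGraph_notMem).and (Filter.eventually_gt_atTop 0)).exists
  have : NeZero K := ⟨hK.ne'⟩
  let G := hubGraph (Fin n) (Fin K) (pathGraph (2 * (d + 1))) 0
  have hG : G.IsTree := isTree_hubGraph (isTree_pathGraph _)
  have hroot : G.degree (.inl none) = n := degree_hubGraph_root.trans (Fintype.card_fin n)
  let e := G.overFinIso rfl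
  refine ⟨hubStarSize (Fin n) (Fin K) (pathGraph (2 * (d + 1))), by simp [hubStarSize], _,
    G.overFin rfl, e (.inl none), e.isTree_iff.1 hG, (e.degree_eq _).trans hroot, ?_, ?_, ?_⟩
  all_goals
    refine e.surjective.forall.2 fun u => ?_
    simp only [card_ekrStar_iso, e.degree_eq]
  · intro hu
    have hleaf : 2 * d + 3 ≤ G.dist (.inl none) u :=
      le_dist_root_of_degree_hubGraph_pathGraph_eq_one (by rw [Fintype.card_fin]; omega) hu
    have := dist_iso_le hG.connected e (.inl none) u
    omega
  · rcases eq_or_ne u (.inl none) with rfl | hu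
    exacts [le_rfl, (hstar u hu).le]
  · exact fun hu => hstar u (by rintro rfl; omega)
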